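/- Let μ ∈ M(ℝ²) satisfy ∫ p² dμ > 0 for every nonzero polynomial p in two variables, let {ℙ_k} be an orthonormal family with respect to μ with three-term coefficient matrices A_{k,i}, and let n ≥ 1. Suppose x_1, …, x_N ∈ ℝ² and λ_1, …, λ_N ∈ ℝ give a cubature formula of degree 2n−1 for μ, i.e. ∫ f dμ = Σ_{k=1}^N λ_k f(x_k) for every polynomial f of total degree at most 2n−1 (with distinct nodes x_k). Then N ≥ dim Π_{n−1}² + (1/2) rank(A_{n−1,1} A_{n−1,2}ᵀ − A_{n−1,2} A_{n−1,1}ᵀ). Furthermore, if μ is centrally symmetric (∫ x^α dμ = 0 for all α of odd total degree), then N ≥ dim Π_{n−1}² + ⌊n/2⌋. -/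

import Mathlib

open MvPolynomial Matrix MeasureTheory

noncomputable section

/-- Real polynomials in `d` variables. -/
abbrev MPoly (d : ℕ) : Type := MvPolynomial (Fin d) ℝ

/-- Multi-indices `α ∈ ℕ^d` of total degree `n`; there are `r_n^d = binom (n+d-1) n` of them. -/
abbrev Idx (d n : ℕ) : Type := {α : Fin d → ℕ // ∑ i, α i = n}

instance (d n : ℕ) : Fintype (Idx d n) :=
  Fintype.subtype (Finset.Nat.antidiagonalTuple d n)
    (fun _ => Finset.Nat.mem_antidiagonalTuple)

/-- The monomial `x^α`. -/
def mono {d : ℕ} (α : Fin d → ℕ) : MPoly d :=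
  MvPolynomial.monomial (Finsupp.equivFunOnFinite.symm α) 1

/-- Multi-indices `α ∈ ℕ^d` of total degree at most `n`. -/
abbrev IdxLe (d n : ℕ) : Type := {α : Fin d → ℕ // ∑ i, α i ≤ n}

instance (d n : ℕ) : Fintype (IdxLe d n) :=
  Fintype.subtype ((Finset.range (n+1)).biUnion fun k => Finset.Nat.antidiagonalTuple d k)
    (fun α => by
      simp only [Finset.mem_biUnion, Finset.mem_range, Finset.Nat.mem_antidiagonalTuple,
        Nat.lt_succ_iff]
      exact ⟨fun ⟨k, hk, he⟩ => he ▸ hk, fun h => ⟨_, h, rfl⟩⟩)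

/-- `P` is a polynomial of total degree strictly less than `n` (the zero polynomial belongs
to every such class). -/
def IsDegLt {d : ℕ} (P : MPoly d) (n : ℕ) : Prop := P = 0 ∨ P.totalDegree < n

/-- The family `{P m α : |α| = m ≤ n}` spans `Π_n^d`, the polynomials of total degree at
most `n`, for every `n`. -/
def SpansPi {d : ℕ} (P : ∀ n, Idx d n → MPoly d) : Prop :=
  ∀ n, Submodule.span ℝ {p | ∃ m, m ≤ n ∧ ∃ α : Idx d m, p = P m α} =
    MvPolynomial.restrictTotalDegree (Fin d) ℝ n

/-- `μ` has all moments finite, i.e. `μ ∈ M(ℝ²)`. -/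
def HasAllMoments (μ : Measure (Fin 2 → ℝ)) : Prop :=
  ∀ α : Fin 2 → ℕ, Integrable (fun x => ∏ i, x i ^ α i) μ

/-!
Write `ℓ` for the cubature functional and `G` for the Gram matrix `(ℓ (P_β P_γ))` of `ℙ_n`. The
defect `L - ℓ` annihilates degree `2n - 1`, so on `x_i P_α · x_j P_β` with `|α| = |β| = n - 1` it
only sees the leading parts and equals the entry of `A_i (1 - G) A_jᵀ`; it is also symmetric in
`i` and `j`. Hence the commutator `A_i A_jᵀ - A_j A_iᵀ` equals `M - Mᵀ` with `M = A_i G A_jᵀ`, and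
its rank is at most `2 rank G`. Evaluating at the nodes factors `G` through `ℝ^N` in a way that
annihilates the values of `Π_{n-1}`, which are independent there, so `rank G ≤ N - dim Π_{n-1}`.

For a centrally symmetric functional, the diagonal blocks of the three-term relation vanish, so the
commutator of level `k + 1` is also `A_{k,j}ᵀ A_{k,i} - A_{k,i}ᵀ A_{k,j}`. Thus if `v` is in its
kernel, `p_i = A_{k,i} v` gives polynomials for which `x_j p_i` and `x_i p_j` have the same leading
part, hence `p_i` and `p_j` have leading parts `x_i h` and `x_j h`. In two variables `v ↦ h`
embeds the kernel of level `k + 1` into that of level `k - 1`, whereas the dimension of the whole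
space drops by two: the rank increases by at least two every two levels.
-/

theorem rank_sub_transpose_le {n K : Type*} [Fintype n] [Field K] (M : Matrix n n K) :
    (M - Mᵀ).rank ≤ 2 * M.rank := by
  have hrange : LinearMap.range (M - Mᵀ).mulVecLin ≤
      LinearMap.range M.mulVecLin ⊔ LinearMap.range Mᵀ.mulVecLin := by
    rintro _ ⟨v, rfl⟩
    rw [mulVecLin_apply, sub_mulVec]
    exact sub_mem (Submodule.mem_sup_left ⟨v, rfl⟩) (Submodule.mem_sup_right ⟨v, rfl⟩)
  calc (M - Mᵀ).rank
      ≤ M.rank + Mᵀ.rank :=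
        (Submodule.finrank_mono hrange).trans (Submodule.finrank_add_le_finrank_add_finrank _ _)
    _ = 2 * M.rank := by rw [rank_transpose, two_mul]

theorem rank_add_card_le_card_of_mul_eq_zero_of_mul_eq_one {l m n K : Type*} [Finite l]
    [Fintype m] [Fintype n] [DecidableEq n] [Field K] {A : Matrix l m K} {V : Matrix m n K}
    {U : Matrix n m K} (hAV : A * V = 0) (hUV : U * V = 1) :
    A.rank + Fintype.card n ≤ Fintype.card m :=
  calc A.rank + Fintype.card n
      = A.rank + (U * V).rank := by rw [hUV, rank_one]
    _ ≤ A.rank + V.rank := by grw [rank_mul_le_right U V]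
    _ ≤ Fintype.card m := rank_add_rank_le_card_of_mul_eq_zero hAV

theorem finrank_le_finrank_of_map_le_map {K E F G : Type*} [DivisionRing K] [AddCommGroup E]
    [Module K E] [AddCommGroup F] [Module K F] [AddCommGroup G] [Module K G] {S : E →ₗ[K] G}
    (hS : Function.Injective S) {T : F →ₗ[K] G} {p : Submodule K E} {q : Submodule K F}
    [FiniteDimensional K q] (h : p.map S ≤ q.map T) : Module.finrank K p ≤ Module.finrank K q :=
  calc Module.finrank K p
      = Module.finrank K (p.map S) := LinearEquiv.finrank_eq (p.equivMapOfInjective S hS)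
    _ ≤ Module.finrank K (q.map T) := Submodule.finrank_mono h
    _ ≤ Module.finrank K q := Submodule.finrank_map_le T q

theorem rank_add_finrank_ker {m n K : Type*} [Fintype n] [Field K] (M : Matrix m n K) :
    M.rank + Module.finrank K (LinearMap.ker M.mulVecLin) = Fintype.card n := by
  rw [Matrix.rank, LinearMap.finrank_range_add_finrank_ker, Module.finrank_fintype_fun_eq_card]

theorem card_idx (d n : ℕ) : Fintype.card (Idx d n) = d.multichoose n := by
  rw [← Fintype.card_congr (Sym.equivNatSumOfFintype (Fin d) n), Sym.card_sym_eq_multichoose,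
    Fintype.card_fin]

theorem card_sigma_idx (d m : ℕ) :
    Fintype.card (Σ k : Fin (m + 1), Idx d k) = (m + d).choose d := by
  simp only [Fintype.card_sigma, card_idx]
  rw [Fin.sum_univ_eq_sum_range (fun k => d.multichoose k), Nat.sum_range_multichoose]

section Polynomial

variable {σ R : Type*} [CommSemiring R]

theorem totalDegree_X_mul_le (i : σ) (p : MvPolynomial σ R) :
    (X i * p).totalDegree ≤ p.totalDegree + 1 := by
  grw [totalDegree_mul, (isHomogeneous_X R i).totalDegree_le, add_comm]

theorem homogeneousComponent_succ_X_mul (n : ℕ) (i : σ) (p : MvPolynomial σ R) :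
    homogeneousComponent (n + 1) (X i * p) = X i * homogeneousComponent n p := by
  let _ : GradedAlgebra (homogeneousSubmodule σ R) := gradedAlgebra
  have h := DirectSum.coe_decompose_mul_add_of_left_mem (homogeneousSubmodule σ R)
    (j := n) (b := p) (isHomogeneous_X R i)
  rw [add_comm 1 n] at h
  rwa [← decomposition.decompose'_apply, ← decomposition.decompose'_apply]

theorem monomial_eq_X_mul {i : σ} {s : σ →₀ ℕ} (hi : s i ≠ 0) (c : R) :
    monomial s c = X i * monomial (s - Finsupp.single i 1) c := by
  rw [X, monomial_mul, one_mul, add_tsub_cancel_of_le]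
  exact Finsupp.single_le_iff.mpr (Nat.one_le_iff_ne_zero.mpr hi)

theorem restrictTotalDegree_succ_le (n : ℕ) :
    restrictTotalDegree σ R (n + 1) ≤ restrictTotalDegree σ R n ⊔
      ⨆ i, (restrictTotalDegree σ R n).map (LinearMap.mulLeft R (X i)) := by
  conv_lhs => rw [restrictTotalDegree, restrictSupport_eq_span]
  rw [Submodule.span_le]
  rintro _ ⟨s, hs, rfl⟩
  obtain rfl | hs0 := eq_or_ne s 0
  · exact Submodule.mem_sup_left (by simp [mem_restrictTotalDegree])
  · obtain ⟨i, hi⟩ := Finsupp.ne_iff.mp hs0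
    refine Submodule.mem_sup_right (Submodule.mem_iSup_of_mem i
      ⟨monomial (s - Finsupp.single i 1) 1, ?_, (monomial_eq_X_mul hi 1).symm⟩)
    have hdeg : (s - Finsupp.single i 1).degree + 1 = s.degree := by
      conv_rhs => rw [← tsub_add_cancel_of_le (Finsupp.single_le_iff.mpr
        (Nat.one_le_iff_ne_zero.mpr hi)), map_add, Finsupp.degree_single]
    exact (mem_restrictTotalDegree _ _ _).mpr
      ((totalDegree_monomial_le _ _).trans (Nat.le_of_succ_le_succ (hdeg.trans_le hs)))

end Polynomial

section CommonFactor

variable {σ R : Type*} [CommRing R] [IsDomain R]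

theorem exists_eq_X_mul_of_X_mul_eq {i j : σ} (hij : i ≠ j) {p q : MvPolynomial σ R}
    (h : X i * p = X j * q) : ∃ r, p = X j * r ∧ q = X i * r := by
  have hdvd : X i ∣ q :=
    ((X_prime (i := i)).dvd_or_dvd ⟨p, h.symm⟩).resolve_left (X_dvd_X.not.mpr hij)
  obtain ⟨r, rfl⟩ := hdvd
  exact ⟨r, mul_left_cancel₀ (X_ne_zero i) (by rw [h, mul_left_comm]), rfl⟩

theorem exists_homogeneousComponent_eq_X_mul {i j : σ} (hij : i ≠ j) {n : ℕ}
    {p q : MvPolynomial σ R} (h : (X i * p - X j * q).totalDegree ≤ n) :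
    ∃ r, homogeneousComponent n p = X j * r ∧ homogeneousComponent n q = X i * r := by
  refine exists_eq_X_mul_of_X_mul_eq hij (sub_eq_zero.mp ?_)
  rw [← homogeneousComponent_succ_X_mul, ← homogeneousComponent_succ_X_mul, ← map_sub]
  exact homogeneousComponent_eq_zero _ _ (Nat.lt_succ_of_le h)

end CommonFactor

theorem isDegLt_iff {d : ℕ} {p : MPoly d} {n : ℕ} :
    IsDegLt p n ↔ ∀ s, n ≤ s.degree → coeff s p = 0 := by
  constructor
  · rintro (rfl | h) s hs
    · exact coeff_zero s
    · exact coeff_eq_zero_of_totalDegree_lt (h.trans_le hs)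
  · refine fun h => or_iff_not_imp_left.mpr fun hp => ?_
    obtain ⟨s, hs, hdeg⟩ := Finset.exists_mem_eq_sup p.support (support_nonempty.mpr hp)
      Finsupp.degree
    by_contra! hn
    exact mem_support_iff.mp hs (h s (hn.trans_eq hdeg))

theorem isDegLt_succ_iff {d : ℕ} {p : MPoly d} {n : ℕ} :
    IsDegLt p (n + 1) ↔ p.totalDegree ≤ n := by
  rw [IsDegLt, Nat.lt_succ_iff, or_iff_right_of_imp]
  rintro rfl
  simp

theorem IsDegLt.X_mul {d : ℕ} {p : MPoly d} {n : ℕ} (hp : IsDegLt p n) (i : Fin d) :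
    IsDegLt (X i * p) (n + 1) := by
  rw [isDegLt_succ_iff]
  obtain rfl | h := hp
  · simp
  · exact (totalDegree_X_mul_le i p).trans h

theorem isDegLt_sub_homogeneousComponent {d n : ℕ} {p : MPoly d} (hp : p.totalDegree ≤ n) :
    IsDegLt (p - homogeneousComponent n p) n := by
  refine isDegLt_iff.mpr fun s hs => ?_
  rw [coeff_sub, coeff_homogeneousComponent]
  split_ifs with h
  · exact sub_self _
  · rw [sub_zero]
    exact coeff_eq_zero_of_totalDegree_lt (hp.trans_lt (lt_of_le_of_ne hs (Ne.symm h)))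

/-- The substitution `p(x) ↦ p(-x)`. -/
def reflection {σ R : Type*} [CommRing R] : MvPolynomial σ R →ₐ[R] MvPolynomial σ R :=
  aeval fun i => -X i

section Reflection

variable {σ R : Type*} [CommRing R]

theorem reflection_X (i : σ) : reflection (X i : MvPolynomial σ R) = -X i :=
  aeval_X _ i

theorem reflection_monomial (s : σ →₀ ℕ) (c : R) :
    reflection (monomial s c) = (-1 : R) ^ s.degree • monomial s c := by
  rw [reflection, aeval_monomial, Finsupp.prod]
  simp_rw [neg_pow (X _ : MvPolynomial σ R)]
  rw [Finset.prod_mul_distrib, Finset.prod_pow_eq_pow_sum, ← Finsupp.degree_apply, algebraMap_eq,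
    mul_left_comm, ← Finsupp.prod, ← monomial_eq, smul_eq_C_mul, map_pow, map_neg, map_one]

theorem coeff_reflection (p : MvPolynomial σ R) (s : σ →₀ ℕ) :
    coeff s (reflection p) = (-1) ^ s.degree * coeff s p := by
  classical
  induction p using MvPolynomial.induction_on' with
  | monomial t c =>
    rw [reflection_monomial, coeff_smul, smul_eq_mul, coeff_monomial]
    split_ifs with h
    · rw [h]
    · simp
  | add p q hp hq => rw [map_add, coeff_add, coeff_add, hp, hq, mul_add]

theorem reflection_reflection (p : MvPolynomial σ R) : reflection (reflection p) = p := by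
  ext s
  rw [coeff_reflection, coeff_reflection, ← mul_assoc, ← mul_pow, neg_one_mul, neg_neg, one_pow,
    one_mul]

end Reflection

theorem IsDegLt.reflection {d n : ℕ} {p : MPoly d} (hp : IsDegLt p n) :
    IsDegLt (reflection p) n :=
  isDegLt_iff.mpr fun s hs => by rw [coeff_reflection, isDegLt_iff.mp hp s hs, mul_zero]

theorem isDegLt_reflection_sub {d n : ℕ} {p : MPoly d} (hp : p.totalDegree ≤ n) :
    IsDegLt (reflection p - (-1 : ℝ) ^ n • p) n := by
  refine isDegLt_iff.mpr fun s hs => ?_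
  rw [coeff_sub, coeff_reflection, coeff_smul, smul_eq_mul]
  obtain rfl | hlt := hs.eq_or_lt
  · exact sub_self _
  · rw [coeff_eq_zero_of_totalDegree_lt (hp.trans_lt hlt), mul_zero, mul_zero, sub_zero]

/-- Central symmetry of a functional on polynomials: the moments of odd order vanish. -/
def IsCentrallySymmetric {d : ℕ} (L : MPoly d →ₗ[ℝ] ℝ) : Prop :=
  ∀ α : Fin d → ℕ, Odd (∑ i, α i) → L (mono α) = 0

theorem IsCentrallySymmetric.map_reflection {d : ℕ} {L : MPoly d →ₗ[ℝ] ℝ}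
    (hL : IsCentrallySymmetric L) (p : MPoly d) : L (reflection p) = L p := by
  induction p using MvPolynomial.induction_on' with
  | monomial s c =>
    rw [reflection_monomial, map_smul]
    obtain hs | hs := Nat.even_or_odd s.degree
    · rw [hs.neg_one_pow, one_smul]
    · have hmono : monomial s c = c • mono s := by simp [mono, smul_monomial]
      rw [hmono, map_smul, hL s (Finsupp.degree_eq_sum s ▸ hs), smul_zero, smul_zero]
  | add p q hp hq => rw [map_add, map_add, map_add, hp, hq]

/-- The polynomials `P n α`, with `|α| = n`, form an orthonormal family for the bilinear form
`(p, q) ↦ L (p * q)` and span the polynomials degree by degree. -/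
structure IsOrthonormalFamily {d : ℕ} (L : MPoly d →ₗ[ℝ] ℝ) (P : ∀ n, Idx d n → MPoly d) :
    Prop where
  spans : SpansPi P
  orthonormal : ∀ n (α β : Idx d n), L (P n α * P n β) = if α = β then 1 else 0
  orthogonal : ∀ n m, n ≠ m → ∀ (α : Idx d n) (β : Idx d m), L (P n α * P m β) = 0

theorem SpansPi.totalDegree_le {d : ℕ} {P : ∀ n, Idx d n → MPoly d} (h : SpansPi P) (n : ℕ)
    (α : Idx d n) : (P n α).totalDegree ≤ n :=
  (mem_restrictTotalDegree _ _ _).mp (h n ▸ Submodule.subset_span ⟨n, le_rfl, α, rfl⟩)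

theorem SpansPi.mem_of_totalDegree_le {d : ℕ} {P : ∀ n, Idx d n → MPoly d} (h : SpansPi P)
    {S : Submodule ℝ (MPoly d)} {n : ℕ} (hS : ∀ k ≤ n, ∀ α, P k α ∈ S) {p : MPoly d}
    (hp : p.totalDegree ≤ n) : p ∈ S := by
  have hmem := (mem_restrictTotalDegree _ _ _).mpr hp
  rw [← h n] at hmem
  refine Submodule.span_le.mpr ?_ hmem
  rintro _ ⟨k, hk, α, rfl⟩
  exact hS k hk α

namespace IsOrthonormalFamily

variable {d : ℕ} {L : MPoly d →ₗ[ℝ] ℝ} {P : ∀ n, Idx d n → MPoly d}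

theorem map_mul_eq_zero (h : IsOrthonormalFamily L P) {n : ℕ} (α : Idx d n) {q : MPoly d}
    (hq : IsDegLt q n) : L (P n α * q) = 0 := by
  obtain rfl | hlt := hq
  · simp
  · exact h.spans.mem_of_totalDegree_le (S := LinearMap.ker (L ∘ₗ LinearMap.mulLeft ℝ (P n α)))
      (fun k hk β => h.orthogonal n k (hk.trans_lt hlt).ne' α β) le_rfl

theorem map_mul_X_mul_eq_zero (h : IsOrthonormalFamily L P) {n : ℕ} (i : Fin d)
    (α : Idx d (n + 1)) {q : MPoly d} (hq : IsDegLt q n) : L (q * (X i * P (n + 1) α)) = 0 := by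
  rw [mul_left_comm, ← mul_assoc, mul_comm]
  exact h.map_mul_eq_zero α (hq.X_mul i)

theorem eq_sum (h : IsOrthonormalFamily L P) {n : ℕ} {p : MPoly d} (hp : p.totalDegree ≤ n) :
    p = ∑ k ∈ Finset.range (n + 1), ∑ α, L (p * P k α) • P k α := by
  have hmem := h.spans.mem_of_totalDegree_le (S := LinearMap.eqLocus LinearMap.id
    (∑ k ∈ Finset.range (n + 1), ∑ α, (L ∘ₗ LinearMap.mulRight ℝ (P k α)).smulRight (P k α)))
    (fun j hj β => ?_) hp
  · simpa [LinearMap.mem_eqLocus, LinearMap.sum_apply] using hmem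
  · suffices P j β = ∑ k ∈ Finset.range (n + 1), ∑ α, L (P j β * P k α) • P k α by
      simpa [LinearMap.mem_eqLocus, LinearMap.sum_apply] using this
    rw [Finset.sum_eq_single_of_mem j (Finset.mem_range_succ_iff.mpr hj)]
    · simp [h.orthonormal]
    · exact fun k _ hk => Finset.sum_eq_zero fun α _ => by
        rw [h.orthogonal j k hk.symm, zero_smul]

theorem map_mul_eq_sum (h : IsOrthonormalFamily L P) {n : ℕ} {p : MPoly d}
    (hp : p.totalDegree ≤ n) (q : MPoly d) :
    L (p * q) = ∑ k ∈ Finset.range (n + 1), ∑ α, L (p * P k α) * L (P k α * q) := by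
  conv_lhs => rw [h.eq_sum hp]
  simp only [Finset.sum_mul, smul_mul_assoc, map_sum, map_smul, smul_eq_mul]

theorem eq_zero_of_map_mul_self_eq_zero (h : IsOrthonormalFamily L P) {p : MPoly d}
    (hp : L (p * p) = 0) : p = 0 := by
  rw [h.map_mul_eq_sum le_rfl] at hp
  simp_rw [mul_comm _ p, ← pow_two] at hp
  have hsq (k : ℕ) : 0 ≤ ∑ α, L (p * P k α) ^ 2 := Finset.sum_nonneg fun α _ => sq_nonneg _
  rw [h.eq_sum (le_refl p.totalDegree)]
  refine Finset.sum_eq_zero fun k hk => Finset.sum_eq_zero fun α _ => ?_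
  have hk0 := (Finset.sum_eq_zero_iff_of_nonneg fun k _ => hsq k).mp hp k hk
  rw [Finset.sum_eq_zero_iff_of_nonneg fun α _ => sq_nonneg _] at hk0
  rw [pow_eq_zero_iff two_ne_zero |>.mp (hk0 α (Finset.mem_univ α)), zero_smul]

theorem map_mul_eq_sum_top (h : IsOrthonormalFamily L P) {n : ℕ} {p q : MPoly d}
    (hp : p.totalDegree ≤ n) (hq : ∀ r, IsDegLt r n → L (r * q) = 0) :
    L (p * q) = ∑ α, L (p * P n α) * L (P n α * q) := by
  rw [h.map_mul_eq_sum hp, Finset.sum_range_succ, add_eq_right]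
  refine Finset.sum_eq_zero fun k hk => Finset.sum_eq_zero fun α _ => ?_
  rw [hq _ (.inr ((h.spans.totalDegree_le k α).trans_lt (Finset.mem_range.mp hk))), mul_zero]

theorem isDegLt_sub_sum (h : IsOrthonormalFamily L P) {n : ℕ} {p : MPoly d}
    (hp : p.totalDegree ≤ n) : IsDegLt (p - ∑ α, L (p * P n α) • P n α) n := by
  have hlower : p - ∑ α, L (p * P n α) • P n α =
      ∑ k ∈ Finset.range n, ∑ α, L (p * P k α) • P k α :=
    sub_eq_of_eq_add (by rw [← Finset.sum_range_succ]; exact h.eq_sum hp)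
  rw [hlower, isDegLt_iff]
  intro s hs
  simp_rw [coeff_sum, coeff_smul]
  refine Finset.sum_eq_zero fun k hk => Finset.sum_eq_zero fun α _ => ?_
  rw [coeff_eq_zero_of_totalDegree_lt, smul_zero]
  exact ((h.spans.totalDegree_le k α).trans_lt (Finset.mem_range.mp hk)).trans_le hs

theorem map_linearCombination_mul (h : IsOrthonormalFamily L P) {n : ℕ} (v : Idx d n → ℝ)
    (β : Idx d n) : L (Fintype.linearCombination ℝ (P n) v * P n β) = v β := by
  simp [Fintype.linearCombination_apply, Finset.sum_mul, h.orthonormal]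

theorem map_linearCombination_mul_eq_zero (h : IsOrthonormalFamily L P) {n : ℕ}
    (v : Idx d n → ℝ) {q : MPoly d} (hq : IsDegLt q n) :
    L (Fintype.linearCombination ℝ (P n) v * q) = 0 := by
  simp [Fintype.linearCombination_apply, Finset.sum_mul, h.map_mul_eq_zero _ hq]

theorem totalDegree_linearCombination_le (h : IsOrthonormalFamily L P) {n : ℕ}
    (v : Idx d n → ℝ) : (Fintype.linearCombination ℝ (P n) v).totalDegree ≤ n :=
  totalDegree_finsetSum_le fun α _ =>
    (totalDegree_smul_le _ _).trans (h.spans.totalDegree_le n α)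

theorem reflection_eq (h : IsOrthonormalFamily L P) (hL : IsCentrallySymmetric L) {n : ℕ}
    (α : Idx d n) : reflection (P n α) = (-1 : ℝ) ^ n • P n α := by
  set r := reflection (P n α) - (-1 : ℝ) ^ n • P n α with hr_def
  have hr : IsDegLt r n := isDegLt_reflection_sub (h.spans.totalDegree_le n α)
  refine sub_eq_zero.mp (h.eq_zero_of_map_mul_self_eq_zero ?_)
  calc L (r * r)
      = L (reflection (P n α) * r) - (-1) ^ n * L (P n α * r) := by
        conv_lhs => enter [2, 1]; rw [hr_def]
        rw [sub_mul, map_sub, smul_mul_assoc, map_smul, smul_eq_mul]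
    _ = L (reflection (P n α * reflection r)) - (-1) ^ n * L (P n α * r) := by
        rw [map_mul reflection, reflection_reflection]
    _ = 0 := by
        rw [hL.map_reflection, h.map_mul_eq_zero α hr.reflection, h.map_mul_eq_zero α hr, mul_zero,
          sub_zero]

theorem map_X_mul_mul_eq_zero (h : IsOrthonormalFamily L P) (hL : IsCentrallySymmetric L) {n : ℕ}
    (i : Fin d) (α β : Idx d n) : L (X i * P n α * P n β) = 0 := by
  have href : L (X i * P n α * P n β) = -L (X i * P n α * P n β) := by
    conv_lhs => rw [← hL.map_reflection, map_mul reflection, map_mul reflection,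
      h.reflection_eq hL, h.reflection_eq hL, reflection_X, mul_smul_comm, mul_smul_comm,
      smul_mul_assoc, smul_smul, ← mul_pow, neg_one_mul, neg_neg, one_pow, one_smul, neg_mul,
      neg_mul, map_neg]
  linarith

end IsOrthonormalFamily

/-- The coefficient matrix `A_{k,i}` of `ℙ_{k+1}` in the three-term relation for `x_i ℙ_k`. -/
def threeTermMatrix {d : ℕ} (L : MPoly d →ₗ[ℝ] ℝ) (P : ∀ n, Idx d n → MPoly d) (k : ℕ)
    (i : Fin d) : Matrix (Idx d k) (Idx d (k + 1)) ℝ :=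
  of fun α β => L (X i * P k α * P (k + 1) β)

/-- The skew-symmetric matrix `A_{k,i} A_{k,j}ᵀ − A_{k,j} A_{k,i}ᵀ`. -/
def threeTermCommutator {d : ℕ} (L : MPoly d →ₗ[ℝ] ℝ) (P : ∀ n, Idx d n → MPoly d) (k : ℕ)
    (i j : Fin d) : Matrix (Idx d k) (Idx d k) ℝ :=
  threeTermMatrix L P k i * (threeTermMatrix L P k j)ᵀ -
    threeTermMatrix L P k j * (threeTermMatrix L P k i)ᵀ

section ThreeTerm

variable {d : ℕ} {L : MPoly d →ₗ[ℝ] ℝ} {P : ∀ n, Idx d n → MPoly d}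

theorem threeTermMatrix_mulVec_apply (k : ℕ) (i : Fin d) (v : Idx d (k + 1) → ℝ) (α : Idx d k) :
    (threeTermMatrix L P k i *ᵥ v) α =
      L (X i * P k α * Fintype.linearCombination ℝ (P (k + 1)) v) := by
  simp [threeTermMatrix, mulVec, dotProduct, Fintype.linearCombination_apply, Finset.mul_sum,
    mul_comm]

theorem transpose_threeTermMatrix_mulVec_apply (k : ℕ) (i : Fin d) (u : Idx d k → ℝ)
    (β : Idx d (k + 1)) :
    ((threeTermMatrix L P k i)ᵀ *ᵥ u) β =
      L (X i * Fintype.linearCombination ℝ (P k) u * P (k + 1) β) := by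
  simp [threeTermMatrix, mulVec, dotProduct, Fintype.linearCombination_apply, Finset.mul_sum,
    mul_comm]

namespace IsOrthonormalFamily

protected theorem totalDegree_X_mul_le (h : IsOrthonormalFamily L P) {n : ℕ} (i : Fin d)
    (α : Idx d n) :
    (X i * P n α).totalDegree ≤ n + 1 := by
  grw [totalDegree_X_mul_le, h.spans.totalDegree_le]

theorem threeTermMatrix_mul_apply (h : IsOrthonormalFamily L P) (k : ℕ) (i j : Fin d)
    (α : Idx d k) (γ : Idx d (k + 2)) :
    (threeTermMatrix L P k i * threeTermMatrix L P (k + 1) j) α γ =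
      L (X i * X j * P k α * P (k + 2) γ) := by
  calc (threeTermMatrix L P k i * threeTermMatrix L P (k + 1) j) α γ
      = ∑ β, L (X i * P k α * P (k + 1) β) * L (P (k + 1) β * (X j * P (k + 2) γ)) := by
        simp only [threeTermMatrix, mul_apply, of_apply, mul_left_comm, mul_assoc]
    _ = L (X i * P k α * (X j * P (k + 2) γ)) :=
        (h.map_mul_eq_sum_top (h.totalDegree_X_mul_le i α)
          fun _ hr => h.map_mul_X_mul_eq_zero j γ hr).symm
    _ = L (X i * X j * P k α * P (k + 2) γ) := by rw [mul_mul_mul_comm, mul_assoc (X i * X j)]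

theorem threeTermMatrix_mul_comm (h : IsOrthonormalFamily L P) (k : ℕ) (i j : Fin d) :
    threeTermMatrix L P k i * threeTermMatrix L P (k + 1) j =
      threeTermMatrix L P k j * threeTermMatrix L P (k + 1) i := by
  ext α γ
  rw [h.threeTermMatrix_mul_apply, h.threeTermMatrix_mul_apply, mul_comm (X i)]

theorem mul_transpose_add_transpose_mul_apply (h : IsOrthonormalFamily L P)
    (hL : IsCentrallySymmetric L) (k : ℕ) (i j : Fin d) (α β : Idx d (k + 1)) :
    (threeTermMatrix L P (k + 1) i * (threeTermMatrix L P (k + 1) j)ᵀ +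
        (threeTermMatrix L P k i)ᵀ * threeTermMatrix L P k j) α β =
      L (X i * P (k + 1) α * (X j * P (k + 1) β)) := by
  have hlow : ∑ l ∈ Finset.range k, ∑ γ, L (X i * P (k + 1) α * P l γ) *
      L (P l γ * (X j * P (k + 1) β)) = 0 := by
    refine Finset.sum_eq_zero fun l hl => Finset.sum_eq_zero fun γ _ => ?_
    have hdeg : IsDegLt (X i * P l γ) (k + 1) :=
      .inr ((h.totalDegree_X_mul_le i γ).trans_lt (by simpa using hl))
    rw [mul_comm (X i), mul_assoc, h.map_mul_eq_zero α hdeg, zero_mul]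
  have hmid : ∑ γ, L (X i * P (k + 1) α * P (k + 1) γ) *
      L (P (k + 1) γ * (X j * P (k + 1) β)) = 0 :=
    Finset.sum_eq_zero fun γ _ => by rw [h.map_X_mul_mul_eq_zero hL, zero_mul]
  rw [h.map_mul_eq_sum (h.totalDegree_X_mul_le i α), Finset.sum_range_succ, Finset.sum_range_succ,
    Finset.sum_range_succ, hlow, hmid, zero_add, add_zero, add_comm]
  simp only [threeTermMatrix, Matrix.add_apply, mul_apply, transpose_apply, of_apply,
    mul_left_comm, mul_comm, mul_assoc]

theorem threeTermCommutator_succ (h : IsOrthonormalFamily L P) (hL : IsCentrallySymmetric L)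
    (k : ℕ) (i j : Fin d) :
    threeTermCommutator L P (k + 1) i j =
      (threeTermMatrix L P k j)ᵀ * threeTermMatrix L P k i -
        (threeTermMatrix L P k i)ᵀ * threeTermMatrix L P k j := by
  rw [threeTermCommutator, sub_eq_sub_iff_add_eq_add, add_comm (_ᵀ * _)]
  ext α β
  rw [h.mul_transpose_add_transpose_mul_apply hL, h.mul_transpose_add_transpose_mul_apply hL,
    mul_mul_mul_comm, mul_comm (X i), mul_mul_mul_comm]

theorem map_mul_eq_zero_of_totalDegree_le_succ (h : IsOrthonormalFamily L P) {k : ℕ} {f : MPoly d}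
    (hlow : ∀ q, IsDegLt q (k + 1) → L (q * f) = 0) (htop : ∀ i α, L (X i * P k α * f) = 0)
    {q : MPoly d} (hq : q.totalDegree ≤ k + 1) : L (q * f) = 0 := by
  let S := LinearMap.ker (L ∘ₗ LinearMap.mulRight ℝ f)
  have hX (i : Fin d) {q : MPoly d} (hq : q.totalDegree ≤ k) : L (X i * q * f) = 0 := by
    refine h.spans.mem_of_totalDegree_le (S := S.comap (LinearMap.mulLeft ℝ (X i)))
      (fun l hl α => ?_) hq
    change L (X i * P l α * f) = 0
    obtain rfl | hlt := hl.eq_or_lt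
    · exact htop i α
    · exact hlow _ (.inr ((h.totalDegree_X_mul_le i α).trans_lt (Nat.succ_lt_succ hlt)))
  have hle : restrictTotalDegree (Fin d) ℝ (k + 1) ≤ S :=
    (restrictTotalDegree_succ_le k).trans <| sup_le
      (fun q hq => hlow q (isDegLt_succ_iff.mpr ((mem_restrictTotalDegree _ _ _).mp hq)))
      (iSup_le fun i => Submodule.map_le_iff_le_comap.mpr
        fun q hq => hX i ((mem_restrictTotalDegree _ _ _).mp hq))
  exact hle ((mem_restrictTotalDegree _ _ _).mpr hq)

theorem eq_zero_of_threeTermMatrix_mulVec_eq_zero (h : IsOrthonormalFamily L P) {k : ℕ}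
    {v : Idx d (k + 1) → ℝ} (hv : ∀ i, threeTermMatrix L P k i *ᵥ v = 0) : v = 0 := by
  ext β
  rw [← h.map_linearCombination_mul v β, mul_comm]
  refine h.map_mul_eq_zero_of_totalDegree_le_succ (fun q hq => ?_) (fun i α => ?_)
    (h.spans.totalDegree_le _ β)
  · rw [mul_comm, h.map_linearCombination_mul_eq_zero v hq]
  · rw [← threeTermMatrix_mulVec_apply, hv, Pi.zero_apply]

theorem map_homogeneousComponent_mul (h : IsOrthonormalFamily L P) {n : ℕ} (v : Idx d n → ℝ)
    (β : Idx d n) :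
    L (homogeneousComponent n (Fintype.linearCombination ℝ (P n) v) * P n β) = v β := by
  have hlow := h.map_mul_eq_zero β
    (isDegLt_sub_homogeneousComponent (h.totalDegree_linearCombination_le v))
  rw [mul_comm, sub_mul, map_sub, h.map_linearCombination_mul] at hlow
  exact (sub_eq_zero.mp hlow).symm

protected theorem exists_homogeneousComponent_eq_X_mul (h : IsOrthonormalFamily L P) {i j : Fin d}
    (hij : i ≠ j) {n : ℕ} {u v : Idx d n → ℝ}
    (huv : (threeTermMatrix L P n i)ᵀ *ᵥ u = (threeTermMatrix L P n j)ᵀ *ᵥ v) :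
    ∃ r, homogeneousComponent n (Fintype.linearCombination ℝ (P n) u) = X j * r ∧
      homogeneousComponent n (Fintype.linearCombination ℝ (P n) v) = X i * r := by
  set f := Fintype.linearCombination ℝ (P n) u
  set g := Fintype.linearCombination ℝ (P n) v
  have hdeg : (X i * f - X j * g).totalDegree ≤ n + 1 := by
    refine (totalDegree_sub _ _).trans (max_le ?_ ?_) <;>
    grw [totalDegree_X_mul_le, h.totalDegree_linearCombination_le]
  have htop (β : Idx d (n + 1)) : L ((X i * f - X j * g) * P (n + 1) β) = 0 := by
    rw [sub_mul, map_sub, ← transpose_threeTermMatrix_mulVec_apply,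
      ← transpose_threeTermMatrix_mulVec_apply, huv, sub_self]
  have hlow := h.isDegLt_sub_sum hdeg
  simp only [htop, zero_smul, Finset.sum_const_zero, sub_zero, isDegLt_succ_iff] at hlow
  exact exists_homogeneousComponent_eq_X_mul hij hlow

theorem eq_zero_of_transpose_mulVec_eq (h : IsOrthonormalFamily L P) {i j : Fin d}
    (hij : i ≠ j) {u v : Idx d 0 → ℝ}
    (huv : (threeTermMatrix L P 0 i)ᵀ *ᵥ u = (threeTermMatrix L P 0 j)ᵀ *ᵥ v) :
    u = 0 ∧ v = 0 := by
  obtain ⟨r, hu, hv⟩ := h.exists_homogeneousComponent_eq_X_mul hij huv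
  have hzero (l : Fin d) (w : Idx d 0 → ℝ)
      (hw : homogeneousComponent 0 (Fintype.linearCombination ℝ (P 0) w) = X l * r) : w = 0 := by
    have hcoeff := congrArg constantCoeff hw
    rw [homogeneousComponent_zero, map_mul constantCoeff, constantCoeff_X, zero_mul,
      constantCoeff_C] at hcoeff
    ext β
    rw [← h.map_homogeneousComponent_mul w β, homogeneousComponent_zero, hcoeff, map_zero,
      zero_mul, map_zero, Pi.zero_apply]
  exact ⟨hzero j u hu, hzero i v hv⟩

theorem exists_eq_transpose_mulVec (h : IsOrthonormalFamily L P) {i j : Fin d} (hij : i ≠ j)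
    {k : ℕ} {u v : Idx d (k + 1) → ℝ}
    (huv : (threeTermMatrix L P (k + 1) i)ᵀ *ᵥ u = (threeTermMatrix L P (k + 1) j)ᵀ *ᵥ v) :
    ∃ w, u = (threeTermMatrix L P k j)ᵀ *ᵥ w ∧ v = (threeTermMatrix L P k i)ᵀ *ᵥ w := by
  obtain ⟨r, hu, hv⟩ := h.exists_homogeneousComponent_eq_X_mul hij huv
  set s := homogeneousComponent k r
  have hs : s.totalDegree ≤ k := (homogeneousComponent_isHomogeneous k r).totalDegree_le
  have hpre (l : Fin d) (w : Idx d (k + 1) → ℝ) (hw : homogeneousComponent (k + 1)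
      (Fintype.linearCombination ℝ (P (k + 1)) w) = X l * r) :
      w = (threeTermMatrix L P k l)ᵀ *ᵥ fun α => L (s * P k α) := by
    have hws : homogeneousComponent (k + 1) (Fintype.linearCombination ℝ (P (k + 1)) w) =
        X l * s := by
      rw [← homogeneousComponent_succ_X_mul, ← hw, homogeneousComponent_of_mem
        (homogeneousComponent_mem _ _), if_pos rfl]
    ext β
    calc w β
        = L (s * (X l * P (k + 1) β)) := by
          rw [← h.map_homogeneousComponent_mul w β, hws, mul_left_comm, mul_assoc]
      _ = ∑ α, L (s * P k α) * L (P k α * (X l * P (k + 1) β)) :=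
          h.map_mul_eq_sum_top hs fun _ hq => h.map_mul_X_mul_eq_zero l β hq
      _ = ((threeTermMatrix L P k l)ᵀ *ᵥ fun α => L (s * P k α)) β := by
          simp only [threeTermMatrix, mulVec, dotProduct, transpose_apply, of_apply, mul_comm,
            mul_assoc]
  exact ⟨_, hpre j u hu, hpre i v hv⟩

end IsOrthonormalFamily

end ThreeTerm

namespace IsOrthonormalFamily

variable {L : MPoly 2 →ₗ[ℝ] ℝ} {P : ∀ n, Idx 2 n → MPoly 2}

theorem transpose_mulVec_eq_of_commutator_mulVec_eq_zero (h : IsOrthonormalFamily L P)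
    (hL : IsCentrallySymmetric L) {k : ℕ} {v : Idx 2 (k + 1) → ℝ}
    (hv : threeTermCommutator L P (k + 1) 0 1 *ᵥ v = 0) :
    (threeTermMatrix L P k 1)ᵀ *ᵥ (threeTermMatrix L P k 0 *ᵥ v) =
      (threeTermMatrix L P k 0)ᵀ *ᵥ (threeTermMatrix L P k 1 *ᵥ v) := by
  rw [h.threeTermCommutator_succ hL, sub_mulVec, sub_eq_zero] at hv
  simpa only [mulVec_mulVec] using hv

theorem two_le_rank_threeTermCommutator_one (h : IsOrthonormalFamily L P)
    (hL : IsCentrallySymmetric L) : 2 ≤ (threeTermCommutator L P 1 0 1).rank := by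
  have hker : LinearMap.ker (threeTermCommutator L P 1 0 1).mulVecLin = ⊥ := by
    refine (LinearMap.ker_eq_bot').mpr fun v hv => ?_
    obtain ⟨h0, h1⟩ := h.eq_zero_of_transpose_mulVec_eq one_ne_zero
      (h.transpose_mulVec_eq_of_commutator_mulVec_eq_zero hL hv)
    exact h.eq_zero_of_threeTermMatrix_mulVec_eq_zero (Fin.forall_fin_two.mpr ⟨h0, h1⟩)
  have hrank := rank_add_finrank_ker (threeTermCommutator L P 1 0 1)
  rw [hker, finrank_bot, card_idx, Nat.multichoose_two] at hrank
  exact hrank.ge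

theorem finrank_ker_threeTermCommutator_add_two_le (h : IsOrthonormalFamily L P)
    (hL : IsCentrallySymmetric L) (n : ℕ) :
    Module.finrank ℝ (LinearMap.ker (threeTermCommutator L P (n + 2) 0 1).mulVecLin) ≤
      Module.finrank ℝ (LinearMap.ker (threeTermCommutator L P n 0 1).mulVecLin) := by
  let S := LinearMap.pi fun i => (threeTermMatrix L P (n + 1) i).mulVecLin
  let T := LinearMap.pi fun i => (threeTermMatrix L P n i)ᵀ.mulVecLin
  have hS : Function.Injective S := (injective_iff_map_eq_zero S).mpr fun v hv =>
    h.eq_zero_of_threeTermMatrix_mulVec_eq_zero (congrFun hv)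
  refine finrank_le_finrank_of_map_le_map hS (T := T) ?_
  rintro _ ⟨v, hv, rfl⟩
  obtain ⟨w, h0, h1⟩ := h.exists_eq_transpose_mulVec one_ne_zero
    (h.transpose_mulVec_eq_of_commutator_mulVec_eq_zero hL hv)
  refine ⟨w, ?_, funext (Fin.forall_fin_two.mpr ⟨h0.symm, h1.symm⟩)⟩
  rw [SetLike.mem_coe, LinearMap.mem_ker, mulVecLin_apply, threeTermCommutator, sub_mulVec,
    ← mulVec_mulVec, ← mulVec_mulVec, ← h0, ← h1, mulVec_mulVec, mulVec_mulVec,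
    h.threeTermMatrix_mul_comm, sub_self]

theorem rank_threeTermCommutator_add_two_le (h : IsOrthonormalFamily L P)
    (hL : IsCentrallySymmetric L) (n : ℕ) :
    (threeTermCommutator L P n 0 1).rank + 2 ≤ (threeTermCommutator L P (n + 2) 0 1).rank := by
  have hker := h.finrank_ker_threeTermCommutator_add_two_le hL n
  have hn := rank_add_finrank_ker (threeTermCommutator L P n 0 1)
  have hn2 := rank_add_finrank_ker (threeTermCommutator L P (n + 2) 0 1)
  rw [card_idx, Nat.multichoose_two] at hn hn2
  omega

theorem two_mul_le_rank_threeTermCommutator (h : IsOrthonormalFamily L P)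
    (hL : IsCentrallySymmetric L) (n : ℕ) :
    2 * ((n + 1) / 2) ≤ (threeTermCommutator L P n 0 1).rank := by
  induction n using Nat.twoStepInduction with
  | zero => simp
  | one => exact h.two_le_rank_threeTermCommutator_one hL
  | more n ih _ =>
    have hstep := h.rank_threeTermCommutator_add_two_le hL n
    omega

end IsOrthonormalFamily

/-- The matrix with entries `ℓ (p α * q β)`, for a functional `ℓ` and two families of polynomials:
a Gram matrix when `p = q`. -/
def gramMatrix {d : ℕ} {κ τ : Type*} (ℓ : MPoly d →ₗ[ℝ] ℝ) (p : κ → MPoly d) (q : τ → MPoly d) :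
    Matrix κ τ ℝ :=
  of fun α β => ℓ (p α * q β)

/-- The cubature functional `f ↦ ∑ k, w k * f (x k)`. -/
def nodalFunctional {d : ℕ} {ι : Type*} [Fintype ι] (x : ι → Fin d → ℝ) (w : ι → ℝ) :
    MPoly d →ₗ[ℝ] ℝ :=
  ∑ k, w k • (aeval (x k)).toLinearMap

/-- The matrix of the values of a family of polynomials at the nodes `x k`. -/
def evalMatrix {d : ℕ} {ι κ : Type*} (x : ι → Fin d → ℝ) (p : κ → MPoly d) : Matrix κ ι ℝ :=
  of fun α k => eval (x k) (p α)

/-- The members of `P` of index less than `n`, as a single family. -/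
def lowerFamily {d : ℕ} (P : ∀ n, Idx d n → MPoly d) (n : ℕ) (a : Σ k : Fin n, Idx d k) :
    MPoly d :=
  P a.1 a.2

section Cubature

variable {d : ℕ} {ι : Type*} [Fintype ι] {x : ι → Fin d → ℝ} {w : ι → ℝ}

theorem nodalFunctional_apply (x : ι → Fin d → ℝ) (w : ι → ℝ) (f : MPoly d) :
    nodalFunctional x w f = ∑ k, w k * eval (x k) f := by
  simp [nodalFunctional, LinearMap.sum_apply]

theorem gramMatrix_sum_smul {κ κ' τ τ' : Type*} [Fintype κ'] [Fintype τ']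
    (ℓ : MPoly d →ₗ[ℝ] ℝ) (A : Matrix κ κ' ℝ) (B : Matrix τ τ' ℝ) (p : κ' → MPoly d)
    (q : τ' → MPoly d) :
    gramMatrix ℓ (fun α => ∑ γ, A α γ • p γ) (fun β => ∑ δ, B β δ • q δ) =
      A * gramMatrix ℓ p q * Bᵀ := by
  ext α β
  simp only [gramMatrix, of_apply, mul_apply, transpose_apply, Finset.mul_sum, Finset.sum_mul,
    map_sum, smul_mul_assoc, mul_smul_comm, map_smul, smul_eq_mul]
  exact Finset.sum_congr rfl fun _ _ => Finset.sum_congr rfl fun _ _ => by ring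

theorem gramMatrix_nodalFunctional [DecidableEq ι] {κ τ : Type*} (p : κ → MPoly d)
    (q : τ → MPoly d) :
    gramMatrix (nodalFunctional x w) p q =
      evalMatrix x p * diagonal w * (evalMatrix x q)ᵀ := by
  ext α β
  rw [mul_apply]
  simp only [gramMatrix, evalMatrix, nodalFunctional_apply, of_apply, mul_diagonal,
    transpose_apply, map_mul]
  exact Finset.sum_congr rfl fun k _ => by ring

namespace IsOrthonormalFamily

variable {L ℓ : MPoly d →ₗ[ℝ] ℝ} {P : ∀ n, Idx d n → MPoly d} {m : ℕ}

theorem gramMatrix_self (h : IsOrthonormalFamily L P) (n : ℕ) :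
    gramMatrix L (P n) (P n) = 1 := by
  ext α β
  simp [gramMatrix, h.orthonormal, one_apply]

theorem gramMatrix_lowerFamily (h : IsOrthonormalFamily L P) (n : ℕ) :
    gramMatrix L (lowerFamily P n) (lowerFamily P n) = 1 := by
  ext ⟨k, α⟩ ⟨l, β⟩
  obtain rfl | hkl := eq_or_ne k l
  · simp [gramMatrix, lowerFamily, h.orthonormal, one_apply]
  · simp [gramMatrix, lowerFamily, h.orthogonal k l (Fin.val_ne_of_ne hkl), one_apply, hkl]

theorem gramMatrix_lowerFamily_right (h : IsOrthonormalFamily L P) (n : ℕ) :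
    gramMatrix L (P n) (lowerFamily P n) = 0 := by
  ext α a
  exact h.orthogonal n a.1 a.1.isLt.ne' α a.2

theorem rank_gramMatrix_add_choose_le_card (h : IsOrthonormalFamily L P)
    (hcub : ∀ f : MPoly d, f.totalDegree ≤ 2 * m + 1 → L f = nodalFunctional x w f) :
    (gramMatrix (nodalFunctional x w) (P (m + 1)) (P (m + 1))).rank + (m + d).choose d ≤
      Fintype.card ι := by
  classical
  let lower := lowerFamily P (m + 1)
  have hlower (a) : (lower a).totalDegree ≤ m :=
    (h.spans.totalDegree_le _ a.2).trans (Fin.is_le a.1)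
  have hexact {κ : Type} {p : κ → MPoly d} (hp : ∀ α, (p α).totalDegree ≤ m + 1) :
      gramMatrix (nodalFunctional x w) p lower = gramMatrix L p lower := by
    ext α a
    refine (hcub _ ((totalDegree_mul _ _).trans ?_)).symm
    grw [hp, hlower]
    omega
  have hzero : evalMatrix x (P (m + 1)) * diagonal w * (evalMatrix x lower)ᵀ = 0 := by
    rw [← gramMatrix_nodalFunctional, hexact (h.spans.totalDegree_le _),
      h.gramMatrix_lowerFamily_right]
  have hone : evalMatrix x lower * diagonal w * (evalMatrix x lower)ᵀ = 1 := by
    rw [← gramMatrix_nodalFunctional, hexact fun a => (hlower a).trans m.le_succ,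
      h.gramMatrix_lowerFamily]
  have hcard := rank_add_card_le_card_of_mul_eq_zero_of_mul_eq_one hzero hone
  rw [card_sigma_idx] at hcard
  rw [gramMatrix_nodalFunctional]
  exact (Nat.add_le_add_right (rank_mul_le_left _ _) _).trans hcard

theorem gramMatrix_X_mul (h : IsOrthonormalFamily L P)
    (hℓ : ∀ f : MPoly d, f.totalDegree ≤ 2 * m + 1 → ℓ f = 0) (i j : Fin d) :
    gramMatrix ℓ (fun α => X i * P m α) (fun β => X j * P m β) =
      threeTermMatrix L P m i * gramMatrix ℓ (P (m + 1)) (P (m + 1)) *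
        (threeTermMatrix L P m j)ᵀ := by
  rw [← gramMatrix_sum_smul]
  ext α β
  let top (l : Fin d) (γ : Idx d m) := ∑ δ, threeTermMatrix L P m l γ δ • P (m + 1) δ
  have hlow (l : Fin d) (γ : Idx d m) : (X l * P m γ - top l γ).totalDegree ≤ m :=
    isDegLt_succ_iff.mp (h.isDegLt_sub_sum (h.totalDegree_X_mul_le l γ))
  have htop (l : Fin d) (γ : Idx d m) : (top l γ).totalDegree ≤ m + 1 :=
    h.totalDegree_linearCombination_le _
  have hmul {p q : MPoly d} (hpq : p.totalDegree + q.totalDegree ≤ 2 * m + 1) : ℓ (p * q) = 0 :=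
    hℓ _ ((totalDegree_mul p q).trans hpq)
  calc ℓ (X i * P m α * (X j * P m β))
      = ℓ (top i α * (X j * P m β)) := by
        rw [← sub_eq_zero, ← map_sub, ← sub_mul]
        exact hmul (by grw [hlow, h.totalDegree_X_mul_le]; omega)
    _ = ℓ (top i α * top j β) := by
        rw [← sub_eq_zero, ← map_sub, ← mul_sub]
        exact hmul (by grw [hlow, htop]; omega)

theorem threeTermCommutator_eq_sub_transpose (h : IsOrthonormalFamily L P)
    (hℓ : ∀ f : MPoly d, f.totalDegree ≤ 2 * m + 1 → L f = ℓ f) (i j : Fin d) :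
    threeTermCommutator L P m i j =
      threeTermMatrix L P m i * gramMatrix ℓ (P (m + 1)) (P (m + 1)) *
          (threeTermMatrix L P m j)ᵀ -
        (threeTermMatrix L P m i * gramMatrix ℓ (P (m + 1)) (P (m + 1)) *
          (threeTermMatrix L P m j)ᵀ)ᵀ := by
  set G := gramMatrix ℓ (P (m + 1)) (P (m + 1)) with hG_def
  have hG : Gᵀ = G := by
    ext α β
    simp [hG_def, gramMatrix, mul_comm]
  have hdefect : gramMatrix (L - ℓ) (P (m + 1)) (P (m + 1)) = 1 - G := by
    rw [← h.gramMatrix_self]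
    rfl
  have hvanish (f : MPoly d) (hf : f.totalDegree ≤ 2 * m + 1) : (L - ℓ) f = 0 :=
    sub_eq_zero.mpr (hℓ f hf)
  have hsymm : gramMatrix (L - ℓ) (fun α => X i * P m α) (fun β => X j * P m β) =
      gramMatrix (L - ℓ) (fun α => X j * P m α) (fun β => X i * P m β) := by
    ext α β
    simp only [gramMatrix, of_apply]
    rw [mul_mul_mul_comm, mul_comm (X i), mul_mul_mul_comm]
  rw [h.gramMatrix_X_mul hvanish, h.gramMatrix_X_mul hvanish, hdefect] at hsymm
  simp only [Matrix.mul_sub, Matrix.sub_mul, Matrix.mul_one] at hsymm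
  rw [threeTermCommutator, transpose_mul, transpose_mul, transpose_transpose, hG,
    ← Matrix.mul_assoc]
  exact sub_eq_sub_iff_sub_eq_sub.mp hsymm

theorem two_mul_choose_add_rank_le_two_mul_card (h : IsOrthonormalFamily L P)
    (hcub : ∀ f : MPoly d, f.totalDegree ≤ 2 * m + 1 → L f = nodalFunctional x w f)
    (i j : Fin d) :
    2 * (m + d).choose d + (threeTermCommutator L P m i j).rank ≤ 2 * Fintype.card ι := by
  set G := gramMatrix (nodalFunctional x w) (P (m + 1)) (P (m + 1))
  have hnodes : G.rank + (m + d).choose d ≤ Fintype.card ι :=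
    h.rank_gramMatrix_add_choose_le_card hcub
  have hcomm : (threeTermCommutator L P m i j).rank ≤ 2 * G.rank := by
    rw [h.threeTermCommutator_eq_sub_transpose hcub]
    grw [rank_sub_transpose_le, rank_mul_le_left, rank_mul_le_right]
  omega

end IsOrthonormalFamily

end Cubature

theorem HasAllMoments.integrable_eval {μ : Measure (Fin 2 → ℝ)} (hμ : HasAllMoments μ)
    (p : MPoly 2) : Integrable (fun x => eval x p) μ := by
  induction p using MvPolynomial.induction_on' with
  | monomial s c =>
    simp only [eval_monomial, Finsupp.prod_fintype _ _ fun _ => pow_zero _]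
    exact (hμ s).const_mul c
  | add p q hp hq =>
    simp only [map_add]
    exact hp.add hq

/-- The moment functional `f ↦ ∫ x, f x ∂μ`. -/
def momentFunctional {μ : Measure (Fin 2 → ℝ)} (hμ : HasAllMoments μ) : MPoly 2 →ₗ[ℝ] ℝ where
  toFun p := ∫ x, eval x p ∂μ
  map_add' p q := by
    simp only [map_add]
    exact integral_add (hμ.integrable_eval p) (hμ.integrable_eval q)
  map_smul' c p := by
    simp only [smul_eval, integral_const_mul, smul_eq_mul, RingHom.id_apply]

theorem momentFunctional_mul {μ : Measure (Fin 2 → ℝ)} (hμ : HasAllMoments μ) (p q : MPoly 2) :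
    momentFunctional hμ (p * q) = ∫ x, eval x p * eval x q ∂μ := by
  simp [momentFunctional]

theorem momentFunctional_mono {μ : Measure (Fin 2 → ℝ)} (hμ : HasAllMoments μ) (α : Fin 2 → ℕ) :
    momentFunctional hμ (mono α) = ∫ x, ∏ i, x i ^ α i ∂μ := by
  simp [momentFunctional, mono, eval_monomial, Finsupp.prod_fintype]

theorem cubature_lower_bounds_two_variables_general {L : MPoly 2 →ₗ[ℝ] ℝ}
    {P : ∀ n, Idx 2 n → MPoly 2} (hP : IsOrthonormalFamily L P) {ι : Type*} [Fintype ι]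
    {x : ι → Fin 2 → ℝ} {w : ι → ℝ} {m : ℕ}
    (hcub : ∀ f : MPoly 2, f.totalDegree ≤ 2 * m + 1 → L f = ∑ k, w k * eval (x k) f) :
    ((m + 2).choose 2 : ℝ) + 1 / 2 * (threeTermCommutator L P m 0 1).rank ≤ Fintype.card ι ∧
      (IsCentrallySymmetric L → (m + 2).choose 2 + (m + 1) / 2 ≤ Fintype.card ι) := by
  have hbound : 2 * (m + 2).choose 2 + (threeTermCommutator L P m 0 1).rank ≤
      2 * Fintype.card ι :=
    hP.two_mul_choose_add_rank_le_two_mul_card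
      (fun f hf => (hcub f hf).trans (nodalFunctional_apply x w f).symm) 0 1
  refine ⟨?_, fun hL => ?_⟩
  · have hcast : (2 * (m + 2).choose 2 + (threeTermCommutator L P m 0 1).rank : ℝ) ≤
        2 * Fintype.card ι := mod_cast hbound
    linarith
  · have hrank := hP.two_mul_le_rank_threeTermCommutator hL m
    omega

/-- Lower bounds for the number of nodes of a cubature formula of degree `2n-1` (`n = m+1`)
in two variables: `N ≥ dim Π_{n-1}² + ½ rank(A_{n-1,1} A_{n-1,2}ᵀ − A_{n-1,2} A_{n-1,1}ᵀ)`,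
and `N ≥ dim Π_{n-1}² + ⌊n/2⌋` (Möller's bound) when `μ` is centrally symmetric. -/
theorem cubature_lower_bounds_two_variables
    (μ : Measure (Fin 2 → ℝ))
    (hmom : HasAllMoments μ)
    (hpos : ∀ p : MPoly 2, p ≠ 0 → 0 < ∫ x, (eval x p) ^ 2 ∂μ)
    (P : ∀ n, Idx 2 n → MPoly 2)
    (hdeg : ∀ n (α : Idx 2 n), (P n α).totalDegree = n)
    (hspan : SpansPi P)
    (hon : ∀ n (α β : Idx 2 n),
      ∫ x, eval x (P n α) * eval x (P n β) ∂μ = if α = β then 1 else 0)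
    (hoff : ∀ n m : ℕ, n ≠ m → ∀ (α : Idx 2 n) (β : Idx 2 m),
      ∫ x, eval x (P n α) * eval x (P m β) ∂μ = 0)
    (A : ∀ k : ℕ, Fin 2 → Matrix (Idx 2 k) (Idx 2 (k+1)) ℝ)
    (hA : ∀ (k : ℕ) (i : Fin 2) (α : Idx 2 k) (β : Idx 2 (k+1)),
      A k i α β = ∫ x, eval x (X i * P k α * P (k+1) β) ∂μ)
    (m N : ℕ) (x : Fin N → (Fin 2 → ℝ)) (w : Fin N → ℝ)
    (hinj : Function.Injective x)
    (hcub : ∀ f : MPoly 2, f.totalDegree ≤ 2 * m + 1 →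
      ∫ y, eval y f ∂μ = ∑ k, w k * eval (x k) f) :
    (((m + 2).choose 2 : ℝ) +
      (1 / 2) * ((A m 0 * (A m 1)ᵀ - A m 1 * (A m 0)ᵀ).rank : ℝ) ≤ (N : ℝ)) ∧
    ((∀ α : Fin 2 → ℕ, Odd (∑ i, α i) → ∫ y, ∏ i, y i ^ α i ∂μ = 0) →
      (m + 2).choose 2 + (m + 1) / 2 ≤ N) := by
  have hP : IsOrthonormalFamily (momentFunctional hmom) P :=
    ⟨hspan, by simpa only [momentFunctional_mul] using hon,
      by simpa only [momentFunctional_mul] using hoff⟩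
  obtain rfl : A = threeTermMatrix (momentFunctional hmom) P := by
    ext k i α β
    exact hA k i α β
  simpa only [threeTermCommutator, IsCentrallySymmetric, momentFunctional_mono, Fintype.card_fin]
    using cubature_lower_bounds_two_variables_general hP hcub
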